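/- arXiv:2302.09355 — 4 statements merged into one kernel-verified Lean document; each statement's English description precedes it below -/
import Mathlib

section
/- Let M ∈ ℝ^{N×N} be symmetric positive definite, let B ∈ ℝ^{N×N} satisfy xᵀ B x > 0 for every nonzero x ∈ ℝ^N, let Δt > 0, and let Ψ ∈ ℝ^{N×R} have linearly independent columns. Then the LSPG reduced-order dynamics matrix G_LSPG := Ψᵀ (B + Bᵀ) Ψ + Δt · Ψᵀ Bᵀ M⁻¹ B Ψ is symmetric positive definite. In particular, a discrete LSPG ROM built with weighting matrix W = M⁻¹ on a full-order model whose dynamics matrix B is positive definite is stable in the sense that its dynamics matrix is positive definite. -/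
open Matrix

/-! The first summand is the congruence by `Ψ` of `B + Bᵀ`, whose quadratic form is `2 xᵀBx > 0`;
it is positive definite because `Ψ` has full column rank. The second is `Δt` times the congruence
of the positive definite `M⁻¹` by `B Ψ`, hence positive semidefinite. -/

/-- Stability of the LSPG ROM with weighting `W = M⁻¹` on a full-order model with positive
definite dynamics matrix `B`: the LSPG reduced dynamics matrix
`G_LSPG = Ψᵀ(B + Bᵀ)Ψ + Δt ΨᵀBᵀM⁻¹BΨ` is symmetric positive definite. -/
theorem lspg_dynamics_matrix_posDef
    (N R : ℕ) (M : Matrix (Fin N) (Fin N) ℝ) (hM : M.PosDef)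
    (B : Matrix (Fin N) (Fin N) ℝ) (hB : ∀ x : Fin N → ℝ, x ≠ 0 → 0 < x ⬝ᵥ (B *ᵥ x))
    (Δt : ℝ) (hΔt : 0 < Δt)
    (Ψ : Matrix (Fin N) (Fin R) ℝ) (hΨ : LinearIndependent ℝ (fun j : Fin R => Ψᵀ j)) :
    (Ψᵀ * (B + Bᵀ) * Ψ + Δt • (Ψᵀ * Bᵀ * M⁻¹ * B * Ψ)).PosDef := by
  have hS : (B + Bᵀ).PosDef := by
    refine Matrix.PosDef.of_dotProduct_mulVec_pos ?_ fun x hx => ?_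
    · simp [Matrix.IsHermitian, conjTranspose_eq_transpose_of_trivial, add_comm]
    · have h := hB x hx
      have ht : x ⬝ᵥ (Bᵀ *ᵥ x) = x ⬝ᵥ (B *ᵥ x) := by
        rw [mulVec_transpose, dotProduct_comm, dotProduct_mulVec]
      rw [star_trivial, add_mulVec, dotProduct_add, ht]
      linarith
  have h1 : (Ψᵀ * (B + Bᵀ) * Ψ).PosDef := by
    have h := hS.conjTranspose_mul_mul_same (B := Ψ) (mulVec_injective_iff.2 hΨ)
    rwa [conjTranspose_eq_transpose_of_trivial] at h
  have h2 : (Ψᵀ * Bᵀ * M⁻¹ * B * Ψ).PosSemidef := by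
    have h := hM.inv.posSemidef.conjTranspose_mul_mul_same (B * Ψ)
    rwa [conjTranspose_eq_transpose_of_trivial, transpose_mul, ← Matrix.mul_assoc] at h
  exact h1.add_posSemidef (h2.smul hΔt.le)
end

section
/- Let V be a real inner product space, let v₁,…,v_N ∈ V, let P ∈ ℝ^{N×N} be the Gram matrix P_{ij} = ⟨v_i, v_j⟩, and let Ψ ∈ ℝ^{N×R} be P-orthonormal, i.e., Ψᵀ P Ψ = I_R. Define the reduced basis functions φ_j := Σ_{i=1}^N Ψ_{ij} v_i, j = 1,…,R, and let u := Σ_{i=1}^N a_i v_i for a ∈ ℝ^N. Then the φ_j are orthonormal in V, and the continuous projection error equals the discrete P-weighted projection error: ‖ u − Σ_{j=1}^R ⟨u, φ_j⟩ φ_j ‖² = (a − Ψ Ψᵀ P a)ᵀ P (a − Ψ Ψᵀ P a). Consequently, the continuous POD minimization problem and the discrete POD minimization problem with weighting matrix P have identical objective values, and the discrete POD basis recovers the continuous POD basis. -/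
/-!
The synthesis map `x ↦ ∑ i, x i • v i` carries the bilinear form `x ⬝ᵥ P *ᵥ y` on coefficient
vectors to the inner product of `V` (`inner_synthesis`). Through it, orthonormality of the `φ j`
is the entrywise form of `Ψᵀ * P * Ψ = 1`. Moreover `⟪u, φ j⟫ = (Ψᵀ *ᵥ P *ᵥ a) j`, so the
residual `u - ∑ j, ⟪u, φ j⟫ • φ j` is the image of `a - Ψ *ᵥ Ψᵀ *ᵥ P *ᵥ a`, and its squared norm
is the `P`-weighted one. The `v i` may be linearly dependent, as the synthesis map is never
inverted.
-/

open Matrix RealInnerProductSpace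

theorem inner_synthesis {V : Type*} [NormedAddCommGroup V] [InnerProductSpace ℝ V]
    {N : ℕ} (v : Fin N → V) (x y : Fin N → ℝ) :
    ⟪∑ i, x i • v i, ∑ i, y i • v i⟫
      = x ⬝ᵥ ((Matrix.of fun i j => ⟪v i, v j⟫) *ᵥ y) := by
  simp only [sum_inner, inner_sum, real_inner_smul_left, real_inner_smul_right, dotProduct,
    mulVec, Matrix.of_apply, Finset.mul_sum]
  rw [Finset.sum_comm]
  refine Finset.sum_congr rfl fun i _ => Finset.sum_congr rfl fun j _ => ?_
  ring

/-- If `Ψ` is `P`-orthonormal (`ΨᵀPΨ = I`) for the Gram matrix `P` of basis functions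
`vᵢ`, then the reduced basis functions `φⱼ = Σᵢ Ψ_{ij} vᵢ` are orthonormal, and the
continuous projection error equals the discrete `P`-weighted projection error:
`‖u − Σⱼ ⟨u, φⱼ⟩ φⱼ‖² = (a − ΨΨᵀPa)ᵀ P (a − ΨΨᵀPa)` for `u = Σᵢ aᵢ vᵢ`. -/
theorem continuous_pod_error_eq_discrete_pod_error
    (V : Type*) [NormedAddCommGroup V] [InnerProductSpace ℝ V]
    (N R : ℕ) (v : Fin N → V)
    (P : Matrix (Fin N) (Fin N) ℝ) (hP : P = Matrix.of fun i j => ⟪v i, v j⟫)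
    (Ψ : Matrix (Fin N) (Fin R) ℝ) (hΨ : Ψᵀ * P * Ψ = 1)
    (φ : Fin R → V) (hφ : ∀ j, φ j = ∑ i, Ψ i j • v i)
    (a : Fin N → ℝ) (u : V) (hu : u = ∑ i, a i • v i) :
    (∀ j k : Fin R, ⟪φ j, φ k⟫ = if j = k then (1 : ℝ) else 0) ∧
    ‖u - ∑ j, ⟪u, φ j⟫ • φ j‖ ^ 2
      = (a - Ψ *ᵥ (Ψᵀ *ᵥ (P *ᵥ a))) ⬝ᵥ (P *ᵥ (a - Ψ *ᵥ (Ψᵀ *ᵥ (P *ᵥ a)))) := by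
  subst hP
  constructor
  · intro j k
    rw [hφ, hφ, inner_synthesis v (fun i => Ψ i j) (fun i => Ψ i k), ← Matrix.one_apply, ← hΨ,
      Matrix.mul_assoc]
    rfl
  · have hcoef : ∀ j, ⟪u, φ j⟫
        = (Ψᵀ *ᵥ ((Matrix.of fun i j => ⟪v i, v j⟫) *ᵥ a)) j := by
      intro j
      rw [real_inner_comm, hφ, hu, inner_synthesis v (fun i => Ψ i j) a]
      rfl
    have hres : u - ∑ j, ⟪u, φ j⟫ • φ j
        = ∑ i, (a - Ψ *ᵥ (Ψᵀ *ᵥ ((Matrix.of fun i j => ⟪v i, v j⟫) *ᵥ a))) i • v i := by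
      simp only [hcoef]
      generalize Ψᵀ *ᵥ ((Matrix.of fun i j => ⟪v i, v j⟫) *ᵥ a) = c
      simp only [hφ, hu, Pi.sub_apply, sub_smul, Finset.sum_sub_distrib, Finset.smul_sum,
        mulVec, dotProduct, Finset.sum_smul, smul_smul]
      rw [Finset.sum_comm]
      simp only [mul_comm]
    rw [hres, ← real_inner_self_eq_norm_sq, inner_synthesis]
end

section
/- Let P ∈ ℝ^{N×N} be symmetric positive definite, let S ∈ ℝ^{N×N_s} have linearly independent columns (so K := Sᵀ P S is symmetric positive definite), let λ₁ ≥ λ₂ ≥ … ≥ λ_{N_s} > 0 be the eigenvalues of K with corresponding orthonormal eigenvectors e₁,…,e_{N_s}, let R ≤ N_s, let E_R = [e₁ … e_R], Λ_R = diag(λ₁,…,λ_R), and set Ψ := S E_R Λ_R^{-1/2}. Then Ψ solves the POD minimization problem: for every Φ ∈ ℝ^{N×R} with Φᵀ P Φ = I_R, Σ_{n=1}^{N_s} ‖ s_n − Ψ Ψᵀ P s_n ‖_P² ≤ Σ_{n=1}^{N_s} ‖ s_n − Φ Φᵀ P s_n ‖_P², where s_n denotes the n-th column of S and ‖x‖_P²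 = xᵀ P x; moreover the minimum value equals Σ_{i=R+1}^{N_s} λ_i. -/
open Matrix

/-! The `P`-orthonormal vectors `uᵢ = λᵢ^{-1/2} S eᵢ` diagonalize the problem. By Pythagoras
(`weighted_pythagoras`) and the invariance of the Frobenius norm under the orthogonal matrix
`[e₁ … e_{N_s}]`, every `P`-orthonormal `Φ` satisfies `err Φ = ∑ᵢ λᵢ - ∑ᵢ λᵢ wᵢ` with
`wᵢ = ‖Φᵀ P uᵢ‖²`. Bessel's inequality (`weighted_bessel`) for the columns of `Φ` gives `wᵢ ≤ 1`, and
for the family `u` it gives `∑ᵢ wᵢ ≤ R`. Among such weights `∑ᵢ λᵢ wᵢ` is largest when the whole mass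
sits on the first `R` indices (`sum_mul_le_sum_first`), and these are the weights of `Ψ`, whose
columns are `u₁, …, u_R`. -/

/-- Pythagoras for the `P`-orthogonal projection onto the columns of a `P`-orthonormal `A`. -/
lemma weighted_pythagoras {n m : Type*} [Fintype n] [Fintype m] [DecidableEq m]
    (P : Matrix n n ℝ) (hP : Pᵀ = P) (A : Matrix n m ℝ) (hA : Aᵀ * P * A = 1) (x : n → ℝ) :
    (x - A *ᵥ (Aᵀ *ᵥ (P *ᵥ x))) ⬝ᵥ (P *ᵥ (x - A *ᵥ (Aᵀ *ᵥ (P *ᵥ x))))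
      = x ⬝ᵥ (P *ᵥ x) - (Aᵀ *ᵥ (P *ᵥ x)) ⬝ᵥ (Aᵀ *ᵥ (P *ᵥ x)) := by
  set y := Aᵀ *ᵥ (P *ᵥ x) with hy
  have h1 : (A *ᵥ y) ⬝ᵥ (P *ᵥ x) = y ⬝ᵥ y := by
    rw [dotProduct_comm, dotProduct_mulVec, ← mulVec_transpose]
  have h2 : x ⬝ᵥ (P *ᵥ (A *ᵥ y)) = y ⬝ᵥ y := by
    rw [dotProduct_mulVec, ← mulVec_transpose, hP, dotProduct_comm, h1]
  have h3 : (A *ᵥ y) ⬝ᵥ (P *ᵥ (A *ᵥ y)) = y ⬝ᵥ y := by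
    rw [dotProduct_comm, dotProduct_mulVec, ← mulVec_transpose, mulVec_mulVec, mulVec_mulVec,
      hA, one_mulVec]
  rw [mulVec_sub, sub_dotProduct, dotProduct_sub, dotProduct_sub, h1, h2, h3]
  ring

/-- Bessel's inequality in the `P`-weighted inner product. -/
lemma weighted_bessel {n m : Type*} [Fintype n] [Fintype m] [DecidableEq m]
    (P : Matrix n n ℝ) (hP : P.PosDef) (A : Matrix n m ℝ) (hA : Aᵀ * P * A = 1) (x : n → ℝ) :
    (Aᵀ *ᵥ (P *ᵥ x)) ⬝ᵥ (Aᵀ *ᵥ (P *ᵥ x)) ≤ x ⬝ᵥ (P *ᵥ x) := by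
  have hsymm : Pᵀ = P := by simpa using hP.isHermitian.eq
  have h := hP.posSemidef.dotProduct_mulVec_nonneg (x - A *ᵥ (Aᵀ *ᵥ (P *ᵥ x)))
  rw [star_trivial, weighted_pythagoras P hsymm A hA] at h
  linarith

/-- Weights in `[0, 1]` of total mass at most `R`, paired with a nonincreasing positive sequence,
give at most the sum of its first `R` terms. -/
lemma sum_mul_le_sum_first {Ns R : ℕ} (hR : R ≤ Ns) (lam w : Fin Ns → ℝ)
    (hdec : ∀ i j : Fin Ns, i ≤ j → lam j ≤ lam i) (hpos : ∀ i, 0 < lam i)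
    (hw0 : ∀ i, 0 ≤ w i) (hw1 : ∀ i, w i ≤ 1) (hw : ∑ i, w i ≤ R) :
    ∑ i, lam i * w i ≤ ∑ i : Fin Ns, lam i * (if (i : ℕ) < R then 1 else 0) := by
  -- a threshold separating the first `R` values from the remaining ones
  obtain ⟨c, hc0, hc1, hc2⟩ : ∃ c : ℝ, 0 ≤ c ∧ (∀ i : Fin Ns, (i : ℕ) < R → c ≤ lam i) ∧
      (∀ i : Fin Ns, ¬ (i : ℕ) < R → lam i ≤ c) := by
    rcases hR.lt_or_eq with h | h
    · exact ⟨lam ⟨R, h⟩, (hpos _).le, fun i hi => hdec _ _ (Fin.le_def.2 hi.le),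
        fun i hi => hdec _ _ (Fin.le_def.2 (not_lt.1 hi))⟩
    · exact ⟨0, le_rfl, fun i _ => (hpos i).le, fun i hi => absurd (h ▸ i.2) hi⟩
  have hcard : ∑ i : Fin Ns, (if (i : ℕ) < R then (1 : ℝ) else 0) = R := by
    rw [Finset.sum_boole, Fin.card_filter_val_lt, min_eq_right hR]
  have key : 0 ≤ ∑ i : Fin Ns, (lam i - c) * ((if (i : ℕ) < R then (1 : ℝ) else 0) - w i) := by
    refine Finset.sum_nonneg fun i _ => ?_
    split_ifs with h
    · exact mul_nonneg (sub_nonneg.2 (hc1 i h)) (sub_nonneg.2 (hw1 i))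
    · exact mul_nonneg_of_nonpos_of_nonpos (sub_nonpos.2 (hc2 i h)) (by linarith [hw0 i])
  simp only [sub_mul, mul_sub, Finset.sum_sub_distrib, ← Finset.mul_sum] at key
  rw [hcard] at key
  have := mul_le_mul_of_nonneg_left hw hc0
  linarith

/-- Optimality of the POD basis: with `K = SᵀPS` symmetric positive definite, eigenvalues
`λ₁ ≥ … ≥ λ_{N_s} > 0` and orthonormal eigenvectors `e₁,…,e_{N_s}`, the matrix
`Ψ = S E_R Λ_R^{-1/2}` minimizes the total `P`-weighted projection error of the snapshot
columns over all `P`-orthonormal `Φ ∈ ℝ^{N×R}`, and the minimum value is `Σ_{i>R} λᵢ`. -/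
theorem pod_basis_optimality
    (N Ns R : ℕ) (hR : R ≤ Ns)
    (P : Matrix (Fin N) (Fin N) ℝ) (hP : P.PosDef)
    (S : Matrix (Fin N) (Fin Ns) ℝ) (hS : LinearIndependent ℝ (fun n : Fin Ns => Sᵀ n))
    (K : Matrix (Fin Ns) (Fin Ns) ℝ) (hK : K = Sᵀ * P * S)
    (lam : Fin Ns → ℝ) (e : Fin Ns → Fin Ns → ℝ)
    (hdec : ∀ i j : Fin Ns, i ≤ j → lam j ≤ lam i)
    (hpos : ∀ i, 0 < lam i)
    (horth : ∀ i j : Fin Ns, e i ⬝ᵥ e j = if i = j then (1 : ℝ) else 0)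
    (heig : ∀ i, K *ᵥ e i = lam i • e i)
    (ER : Matrix (Fin Ns) (Fin R) ℝ) (hER : ER = Matrix.of fun n r => e (Fin.castLE hR r) n)
    (Ψ : Matrix (Fin N) (Fin R) ℝ)
    (hΨ : Ψ = S * ER * Matrix.diagonal fun r => (Real.sqrt (lam (Fin.castLE hR r)))⁻¹)
    (err : Matrix (Fin N) (Fin R) ℝ → ℝ)
    (herr : err = fun Φ => ∑ n : Fin Ns,
      (Sᵀ n - Φ *ᵥ (Φᵀ *ᵥ (P *ᵥ Sᵀ n))) ⬝ᵥ (P *ᵥ (Sᵀ n - Φ *ᵥ (Φᵀ *ᵥ (P *ᵥ Sᵀ n))))) :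
    (∀ Φ : Matrix (Fin N) (Fin R) ℝ, Φᵀ * P * Φ = 1 → err Ψ ≤ err Φ) ∧
    err Ψ = ∑ i ∈ Finset.univ.filter (fun i : Fin Ns => R ≤ (i : ℕ)), lam i := by
  have hsymm : Pᵀ = P := by simpa using hP.isHermitian.eq
  set E : Matrix (Fin Ns) (Fin Ns) ℝ := Matrix.of fun n i => e i n with hE
  have hEE : Eᵀ * E = 1 := by
    ext i j
    rw [one_apply, ← horth i j]
    rfl
  have hEE' : E * Eᵀ = 1 := mul_eq_one_comm.1 hEE
  have hKe : ∀ i j, (S *ᵥ e i) ⬝ᵥ (P *ᵥ (S *ᵥ e j)) = if i = j then lam j else 0 := by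
    intro i j
    have : (S *ᵥ e i) ⬝ᵥ (P *ᵥ (S *ᵥ e j)) = e i ⬝ᵥ (K *ᵥ e j) := by
      rw [hK, dotProduct_comm, dotProduct_mulVec, ← mulVec_transpose, mulVec_mulVec,
        mulVec_mulVec, dotProduct_comm, Matrix.mul_assoc]
    rw [this, heig, dotProduct_smul, horth]
    split_ifs <;> simp
  -- columns of `U` are the normalized modes `uᵢ`
  set U : Matrix (Fin N) (Fin Ns) ℝ := Matrix.of fun k i => (√(lam i))⁻¹ * (S *ᵥ e i) k with hU
  have hUcol : ∀ i, Uᵀ i = (√(lam i))⁻¹ • (S *ᵥ e i) := fun i => rfl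
  have hsq : ∀ i, √(lam i) ≠ 0 := fun i => (Real.sqrt_pos.2 (hpos i)).ne'
  have hSe : ∀ i, S *ᵥ e i = √(lam i) • Uᵀ i := by
    intro i
    rw [hUcol, smul_smul, mul_inv_cancel₀ (hsq i), one_smul]
  have hUU : ∀ i j, Uᵀ i ⬝ᵥ (P *ᵥ Uᵀ j) = if i = j then 1 else 0 := by
    intro i j
    rw [hUcol, hUcol, mulVec_smul, smul_dotProduct, dotProduct_smul, hKe]
    split_ifs with h
    · subst h
      have := Real.mul_self_sqrt (hpos i).le
      have h0 := hsq i
      simp only [smul_eq_mul]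
      field_simp
      rw [sq, this]
    · simp
  -- entries of `Aᵀ P B` as weighted inner products of columns
  have entry : ∀ {a b : ℕ} (A : Matrix (Fin N) (Fin a) ℝ) (B : Matrix (Fin N) (Fin b) ℝ) i j,
      (Aᵀ * P * B) i j = Aᵀ i ⬝ᵥ (P *ᵥ Bᵀ j) := by
    intro a b A B i j
    rw [Matrix.mul_assoc]
    rfl
  have hU1 : Uᵀ * P * U = 1 := by
    ext i j
    rw [entry, hUU, one_apply]
  have hΨcol : ∀ r, Ψᵀ r = Uᵀ (Fin.castLE hR r) := by
    intro r
    ext k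
    rw [transpose_apply, hΨ, mul_diagonal, hUcol, Pi.smul_apply, smul_eq_mul, mul_comm, hER]
    rfl
  have hΨ1 : Ψᵀ * P * Ψ = 1 := by
    ext i j
    rw [entry, hΨcol, hΨcol, hUU, one_apply]
    simp [Fin.ext_iff]
  have frob : ∀ {a : ℕ} (M : Matrix (Fin a) (Fin Ns) ℝ),
      ∑ n, Mᵀ n ⬝ᵥ Mᵀ n = ∑ i, (M *ᵥ e i) ⬝ᵥ (M *ᵥ e i) := by
    intro a M
    have h1 : ∑ n, Mᵀ n ⬝ᵥ Mᵀ n = trace (Mᵀ * M) := rfl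
    have h2 : ∑ i, (M *ᵥ e i) ⬝ᵥ (M *ᵥ e i) = trace ((M * E)ᵀ * (M * E)) := rfl
    rw [h1, h2, transpose_mul, Matrix.mul_assoc, trace_mul_comm Eᵀ, Matrix.mul_assoc,
      Matrix.mul_assoc, hEE', Matrix.mul_one]
  have htr : ∑ n, Sᵀ n ⬝ᵥ (P *ᵥ Sᵀ n) = ∑ i, lam i := by
    have h1 : ∑ n, Sᵀ n ⬝ᵥ (P *ᵥ Sᵀ n) = trace K := by
      rw [hK]
      exact Finset.sum_congr rfl fun n _ => (entry S S n n).symm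
    have h2 : trace (Eᵀ * (K * E)) = ∑ i, lam i := by
      refine Finset.sum_congr rfl fun i _ => ?_
      have : (Eᵀ * (K * E)).diag i = e i ⬝ᵥ (K *ᵥ e i) := rfl
      rw [this, heig, dotProduct_smul, horth]
      simp
    rw [h1, ← h2, trace_mul_comm, Matrix.mul_assoc, hEE', Matrix.mul_one]
  have herrΦ : ∀ Φ : Matrix (Fin N) (Fin R) ℝ, Φᵀ * P * Φ = 1 → err Φ =
      ∑ i, lam i - ∑ i, lam i * ((Φᵀ *ᵥ (P *ᵥ Uᵀ i)) ⬝ᵥ (Φᵀ *ᵥ (P *ᵥ Uᵀ i))) := by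
    intro Φ hΦ
    have hM : ∀ n, (Φᵀ * (P * S))ᵀ n = Φᵀ *ᵥ (P *ᵥ Sᵀ n) := fun n => rfl
    have := frob (Φᵀ * (P * S))
    simp only [hM] at this
    simp only [herr, weighted_pythagoras P hsymm Φ hΦ, Finset.sum_sub_distrib]
    rw [htr, this]
    congr 1
    refine Finset.sum_congr rfl fun i _ => ?_
    rw [← mulVec_mulVec, ← mulVec_mulVec, hSe, mulVec_smul, mulVec_smul, smul_dotProduct,
      dotProduct_smul, smul_smul, Real.mul_self_sqrt (hpos i).le, smul_eq_mul]
  have hwΨ : ∀ i : Fin Ns, (Ψᵀ *ᵥ (P *ᵥ Uᵀ i)) ⬝ᵥ (Ψᵀ *ᵥ (P *ᵥ Uᵀ i))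
      = if (i : ℕ) < R then 1 else 0 := by
    intro i
    have hcoord : ∀ r, (Ψᵀ *ᵥ (P *ᵥ Uᵀ i)) r = if Fin.castLE hR r = i then 1 else 0 := by
      intro r
      rw [← hUU, ← hΨcol]
      rfl
    simp only [dotProduct, hcoord]
    split_ifs with h
    · rw [Finset.sum_eq_single ⟨i, h⟩]
      · simp
      · intro r _ hr
        have : Fin.castLE hR r ≠ i := fun h' => hr (Fin.ext (by simp [← h']))
        simp [this]
      · simp
    · refine Finset.sum_eq_zero fun r _ => ?_
      have : Fin.castLE hR r ≠ i := fun h' => h (by simp [← h'])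
      simp [this]
  have herrΨ := herrΦ Ψ hΨ1
  simp only [hwΨ] at herrΨ
  refine ⟨fun Φ hΦ => ?_, ?_⟩
  · rw [herrΨ, herrΦ Φ hΦ]
    refine sub_le_sub_left (sum_mul_le_sum_first hR lam _ hdec hpos
      (fun i => ?_) (fun i => ?_) ?_) _
    · exact Finset.sum_nonneg fun r _ => mul_self_nonneg _
    · refine (weighted_bessel P hP Φ hΦ (Uᵀ i)).trans_eq ?_
      rw [hUU, if_pos rfl]
    · -- exchanging the sums reduces the total mass to Bessel's inequality for each column of `Φ`
      have hswap : ∀ i r, (Φᵀ *ᵥ (P *ᵥ Uᵀ i)) r = (Uᵀ *ᵥ (P *ᵥ Φᵀ r)) i := by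
        intro i r
        change Φᵀ r ⬝ᵥ (P *ᵥ Uᵀ i) = Uᵀ i ⬝ᵥ (P *ᵥ Φᵀ r)
        rw [dotProduct_mulVec, ← mulVec_transpose, hsymm, dotProduct_comm]
      simp only [dotProduct, hswap]
      rw [Finset.sum_comm]
      calc _ ≤ ∑ r : Fin R, (1 : ℝ) := by
            refine Finset.sum_le_sum fun r _ => ?_
            refine (weighted_bessel P hP U hU1 (Φᵀ r)).trans_eq ?_
            rw [← entry, hΦ, one_apply_eq]
        _ = R := by simp
  · rw [herrΨ, ← Finset.sum_sub_distrib, Finset.sum_filter]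
    refine Finset.sum_congr rfl fun i _ => ?_
    by_cases h : (i : ℕ) < R
    · simp [h, not_le.2 h]
    · simp [h, not_lt.1 h]
end

section
/- Let M ∈ ℝ^{N×N} be symmetric positive definite, let Ψ ∈ ℝ^{N×R} satisfy Ψᵀ M Ψ = I_R, let 𝔸' := M⁻¹ − Ψ Ψᵀ, let A ∈ ℝ^{N×N}, let τ ∈ ℝ, and let f ∈ ℝ^N satisfy 𝔸' f = 0. Then for all d, ŷ ∈ ℝ^R, the APG closed coarse-scale equations coincide with a Petrov–Galerkin projection of the full-order residual: Ψᵀ M Ψ d + Ψᵀ A ( Ψ ŷ − τ 𝔸' A Ψ ŷ ) − Ψᵀ f = [ ( I_N − τ (𝔸')ᵀ Aᵀ ) Ψ ]ᵀ ( M Ψ d + A Ψ ŷ − f ). -/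
/-!
Transposing the test basis gives `Ψᵀ (I − τ A 𝔸')`, so the two sides differ only in the arguments
fed to `𝔸'`: the full-order residual `M Ψ d + A Ψ ŷ − f` on the right, and `A Ψ ŷ` on the left.
The normalization `Ψᵀ M Ψ = I` yields `𝔸' M Ψ = Ψ − Ψ = 0`, and the forcing has no fine-scale
component, so both arguments have the same image and the two sides agree.
-/

open Matrix

/-- The APG closed coarse-scale equations coincide with a Petrov–Galerkin projection of the
full-order residual: assuming `ΨᵀMΨ = I`, `𝔸' = M⁻¹ − ΨΨᵀ`, and `𝔸' f = 0`,
`ΨᵀMΨd + ΨᵀA(Ψŷ − τ𝔸'AΨŷ) − Ψᵀf = [(I − τ(𝔸')ᵀAᵀ)Ψ]ᵀ (MΨd + AΨŷ − f)`. -/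
theorem apg_petrov_galerkin_form
    (N R : ℕ) (M : Matrix (Fin N) (Fin N) ℝ) (hM : M.PosDef)
    (Ψ : Matrix (Fin N) (Fin R) ℝ) (hΨ : Ψᵀ * M * Ψ = 1)
    (A' : Matrix (Fin N) (Fin N) ℝ) (hA' : A' = M⁻¹ - Ψ * Ψᵀ)
    (A : Matrix (Fin N) (Fin N) ℝ) (τ : ℝ)
    (f : Fin N → ℝ) (hf : A' *ᵥ f = 0) :
    ∀ d yhat : Fin R → ℝ,
      Ψᵀ *ᵥ (M *ᵥ (Ψ *ᵥ d)) +
          Ψᵀ *ᵥ (A *ᵥ (Ψ *ᵥ yhat - τ • (A' *ᵥ (A *ᵥ (Ψ *ᵥ yhat))))) - Ψᵀ *ᵥ f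
        = ((1 - τ • (A'ᵀ * Aᵀ)) * Ψ)ᵀ *ᵥ (M *ᵥ (Ψ *ᵥ d) + A *ᵥ (Ψ *ᵥ yhat) - f) := by
  intro d yhat
  -- The fine-scale operator annihilates `M` times the coarse space.
  have hker : A' * M * Ψ = 0 := by
    have hu : IsUnit M.det := (Matrix.isUnit_iff_isUnit_det M).1 hM.isUnit
    rw [hA', Matrix.sub_mul, Matrix.sub_mul, Matrix.nonsing_inv_mul M hu, Matrix.one_mul,
      Matrix.mul_assoc, Matrix.mul_assoc, ← Matrix.mul_assoc Ψᵀ, hΨ, Matrix.mul_one, sub_self]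
  have hd : A' *ᵥ (M *ᵥ (Ψ *ᵥ d)) = 0 := by
    rw [Matrix.mulVec_mulVec, Matrix.mulVec_mulVec, hker, Matrix.zero_mulVec]
  have htest : ((1 - τ • (A'ᵀ * Aᵀ)) * Ψ)ᵀ = Ψᵀ * (1 - τ • (A * A')) := by
    simp [Matrix.transpose_mul]
  -- Hence `A'` sees only the `A Ψ ŷ` part of the full-order residual.
  have hres : A' *ᵥ (M *ᵥ (Ψ *ᵥ d) + A *ᵥ (Ψ *ᵥ yhat) - f) = A' *ᵥ (A *ᵥ (Ψ *ᵥ yhat)) := by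
    rw [Matrix.mulVec_sub, Matrix.mulVec_add, hd, hf, zero_add, sub_zero]
  rw [htest, ← Matrix.mulVec_mulVec, Matrix.sub_mulVec, Matrix.one_mulVec, Matrix.smul_mulVec,
    ← Matrix.mulVec_mulVec, hres]
  simp only [Matrix.mulVec_sub, Matrix.mulVec_add, Matrix.mulVec_smul]
  abel
end
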